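/- arXiv:1006.1874 — 6 statements merged into one kernel-verified Lean document; each statement's English description precedes it below -/
import Mathlib

section
/- Let K = [[A, B],[Bᵀ, 0]] be an F-matrix with A ∈ ℝ^{n×n} and B ∈ ℝ^{n×m}, and let i ∈ {1,…,n}, j ∈ {1,…,m} be indices with B_{ij} ≠ 0. Then the 2×2 pivot P = [[A_{ii}, B_{ij}],[B_{ij}, 0]] is invertible, and the Schur complement K' = K_{RR} − K_{RP} P^{−1} K_{PR} of K with respect to the rows and columns indexed by velocity i and pressure j (where R is the remaining index set, ordered as the velocities other than i followed by the pressures other than j) is again an F-matrix: K' = [[A', B'],[B'ᵀ, 0]] with A' ∈ ℝ^{(n−1)×(n−1)} positive definite, B' ∈ ℝ^{(n−1)×(m−1)} a gradient-matrix, and in particular the pressure–pressure block of K' is the zero matrix. -/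
open Matrix

/-- A real matrix is a gradient-matrix if every row has at most two nonzero
entries and every row sums to zero. -/
def IsGradientMatrix {α β : Type*} [Fintype α] [Fintype β] [DecidableEq β]
    (B : Matrix α β ℝ) : Prop :=
  ∀ i : α, (Finset.univ.filter fun j => B i j ≠ 0).card ≤ 2 ∧ ∑ j, B i j = 0

/-- Positive definiteness (symmetry not assumed): `xᵀ A x > 0` for all `x ≠ 0`. -/
def IsPosDefQuad {α : Type*} [Fintype α] (A : Matrix α α ℝ) : Prop :=
  ∀ x : α → ℝ, x ≠ 0 → 0 < x ⬝ᵥ A.mulVec x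

/-- The saddle point matrix `K = [[A, B], [Bᵀ, 0]]`. -/
def saddleMatrix {n m : ℕ} (A : Matrix (Fin n) (Fin n) ℝ) (B : Matrix (Fin n) (Fin m) ℝ) :
    Matrix (Fin n ⊕ Fin m) (Fin n ⊕ Fin m) ℝ :=
  Matrix.fromBlocks A B Bᵀ 0

/-- The embedding of the 2×2 pivot index pair (velocity `i`, pressure `j`). -/
def pivotEmb {n m : ℕ} (i : Fin n) (j : Fin m) : Fin 2 → (Fin n ⊕ Fin m) :=
  ![Sum.inl i, Sum.inr j]

/-- The embedding of the remaining indices: velocities other than `i` followed by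
pressures other than `j`. -/
def restEmb {n m : ℕ} (i : Fin n) (j : Fin m) :
    ({i' : Fin n // i' ≠ i} ⊕ {j' : Fin m // j' ≠ j}) → (Fin n ⊕ Fin m) :=
  Sum.map Subtype.val Subtype.val

/-- The Schur complement `K_RR − K_RP P⁻¹ K_PR` of the saddle point matrix with
respect to the 2×2 pivot on (velocity `i`, pressure `j`). -/
noncomputable def schurPivot2 {n m : ℕ} (A : Matrix (Fin n) (Fin n) ℝ)
    (B : Matrix (Fin n) (Fin m) ℝ) (i : Fin n) (j : Fin m) :
    Matrix ({i' : Fin n // i' ≠ i} ⊕ {j' : Fin m // j' ≠ j})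
           ({i' : Fin n // i' ≠ i} ⊕ {j' : Fin m // j' ≠ j}) ℝ :=
  (saddleMatrix A B).submatrix (restEmb i j) (restEmb i j) -
    (saddleMatrix A B).submatrix (restEmb i j) (pivotEmb i j) *
      ((saddleMatrix A B).submatrix (pivotEmb i j) (pivotEmb i j))⁻¹ *
        (saddleMatrix A B).submatrix (pivotEmb i j) (restEmb i j)

/-!
Let `E` be the matrix that subtracts `B k j / B i j` times row `i` from each row `k` and then drops
row `i`. The inverse of `[[a, b], [b, 0]]` is `[[0, 1 / b], [1 / b, -a / b ^ 2]]`, so the Schur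
complement is `[[E A Eᵀ, E B], [(E B)ᵀ, 0]]` with column `j` of `E B`, which is zero, removed; the
pressure–pressure block stays zero because the velocity–velocity entry of the inverse vanishes.
The block `E A Eᵀ` is positive definite because `Eᵀ` is injective. The rows of `E B` still sum to
zero, and each is either a row `k` of `B` with `B k j = 0` or a combination of two rows that are
both nonzero at `j` and cancel there, so at most `2 + 2 - 2` nonzero entries survive.
-/

section Elimination

variable {α β γ K : Type*} [DecidableEq α] [DivisionRing K]

/-- The Gaussian elimination step on pivot `(i, j)`: left multiplication by this matrix subtracts
`B k j / B i j` times row `i` from every row `k ≠ i` and drops row `i`. -/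
def pivotElimination (B : Matrix α β K) (i : α) (j : β) : Matrix {k // k ≠ i} α K :=
  (1 - vecMulVec (fun k => B k j / B i j) (Pi.single i 1)).submatrix (↑) id

theorem pivotElimination_mul_apply [Fintype α] (B : Matrix α β K) (i : α) (j : β)
    (M : Matrix α γ K) (k : {k // k ≠ i}) (q : γ) :
    (pivotElimination B i j * M) k q = M k q - B k j / B i j * M i q := by
  change ((1 - vecMulVec (fun k => B k j / B i j) (Pi.single i 1) : Matrix α α K) * M) k q = _
  simp [Matrix.sub_mul, vecMulVec_mul, vecMulVec_apply]

theorem pivotElimination_mul_apply_pivot [Fintype α] {B : Matrix α β K} {i : α} {j : β}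
    (hij : B i j ≠ 0) (k : {k // k ≠ i}) : (pivotElimination B i j * B) k j = 0 := by
  rw [pivotElimination_mul_apply, div_mul_cancel₀ _ hij, sub_self]

/-- The gradient block `B'` of the Schur complement: one elimination step on `B`, after which the
pivot column vanishes and is dropped. -/
def reducedGradient [Fintype α] (B : Matrix α β K) (i : α) (j : β) :
    Matrix {k // k ≠ i} {q // q ≠ j} K :=
  (pivotElimination B i j * B).submatrix id (↑)

theorem reducedGradient_apply [Fintype α] (B : Matrix α β K) (i : α) (j : β) (k : {k // k ≠ i})
    (q : {q // q ≠ j}) : reducedGradient B i j k q = B k q - B k j / B i j * B i q :=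
  pivotElimination_mul_apply B i j B k q

theorem vecMul_pivotElimination_injective [Fintype α] (B : Matrix α β K) (i : α) (j : β) :
    Function.Injective (pivotElimination B i j).vecMul := by
  let inclusion : Matrix α {k // k ≠ i} K := (1 : Matrix α α K).submatrix id (↑)
  have mul_inclusion : pivotElimination B i j * inclusion = 1 := by
    ext k l
    simp [inclusion, pivotElimination_mul_apply, one_apply, Subtype.ext_iff, l.2.symm]
  exact Function.LeftInverse.injective (g := (· ᵥ* inclusion)) fun x => by
    simp only [vecMul_vecMul, mul_inclusion, vecMul_one]

theorem mul_transpose_pivotElimination_apply {F : Type*} [Field F] [Fintype α] (B : Matrix α β F)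
    (i : α) (j : β) (M : Matrix γ α F) (p : γ) (k : {k // k ≠ i}) :
    (M * (pivotElimination B i j)ᵀ) p k = M p k - B k j / B i j * M p i := by
  rw [← transpose_apply (M * _), transpose_mul, transpose_transpose, pivotElimination_mul_apply]
  rfl

end Elimination

section Pivot

theorem isUnit_pivot_iff {R : Type*} [CommRing R] {a b : R} :
    IsUnit !![a, b; b, 0] ↔ IsUnit b := by
  simp [isUnit_iff_isUnit_det, det_fin_two_of]

variable {K : Type*} [Field K]

theorem inv_pivot (a : K) {b : K} (hb : b ≠ 0) :
    !![a, b; b, 0]⁻¹ = !![0, 1 / b; 1 / b, -a / b ^ 2] := by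
  have cancel : a * (1 / b) + b * (-a / b ^ 2) = 0 := by
    field_simp
    ring
  refine inv_eq_right_inv ?_
  rw [mul_fin_two, one_fin_two, cancel, mul_one_div_cancel hb]
  simp only [mul_zero, zero_mul, zero_add, add_zero]

theorem mul_inv_pivot_mul_apply {α β : Type*} (a : K) {b : K} (hb : b ≠ 0)
    (M : Matrix α (Fin 2) K) (N : Matrix (Fin 2) β K) (p : α) (q : β) :
    (M * !![a, b; b, 0]⁻¹ * N) p q =
      M p 1 / b * N 0 q + M p 0 / b * N 1 q - a * (M p 1 / b) * (N 1 q / b) := by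
  simp only [inv_pivot a hb, mul_apply, Fin.sum_univ_two, of_apply, cons_val', cons_val_zero,
    cons_val_one, cons_val_fin_one]
  ring

end Pivot

theorem IsPosDefQuad.mul_mul_transpose_same {α β : Type*} [Fintype α] [Fintype β]
    {A : Matrix α α ℝ} (hA : IsPosDefQuad A) {C : Matrix β α ℝ}
    (hC : Function.Injective C.vecMul) : IsPosDefQuad (C * A * Cᵀ) := by
  intro x hx
  have hxC : x ᵥ* C ≠ 0 := fun h => hx (hC (h.trans (zero_vecMul C).symm))
  calc 0 < (x ᵥ* C) ⬝ᵥ A *ᵥ (x ᵥ* C) := hA _ hxC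
    _ = x ⬝ᵥ (C * A * Cᵀ) *ᵥ x := by
      rw [← mulVec_mulVec, ← mulVec_mulVec, mulVec_transpose, dotProduct_mulVec x C]

section Gradient

open Finset

variable {α β : Type*} [Fintype α] [Fintype β]

theorem card_ne_zero_sub_div_smul_add_two_le {K : Type*} [DivisionRing K] [DecidableEq K]
    {u v : β → K} {j : β} (hu : u j ≠ 0) (hv : v j ≠ 0) :
    #{q | (u - (u j / v j) • v) q ≠ 0} + 2 ≤ #{q | u q ≠ 0} + #{q | v q ≠ 0} := by
  classical
  set S : Finset β := {q | u q ≠ 0}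
  set T : Finset β := {q | v q ≠ 0}
  have hjS : j ∈ S := by simpa [S] using hu
  have hjT : j ∈ T := by simpa [T] using hv
  have support_subset : ({q | (u - (u j / v j) • v) q ≠ 0} : Finset β) ⊆ (S ∪ T).erase j := by
    intro q hq
    simp only [mem_filter_univ, Pi.sub_apply, Pi.smul_apply, smul_eq_mul] at hq
    simp only [S, T, mem_erase, mem_union, mem_filter_univ]
    refine ⟨?_, ?_⟩
    · rintro rfl
      exact hq (by rw [div_mul_cancel₀ _ hv, sub_self])
    · contrapose! hq
      rw [hq.1, hq.2, mul_zero, sub_zero]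
  have inter_pos : 0 < #(S ∩ T) := card_pos.2 ⟨j, mem_inter.2 ⟨hjS, hjT⟩⟩
  have card_support := card_le_card support_subset
  have card_erase := card_erase_add_one (mem_union_left T hjS)
  have card_union := card_union_add_card_inter S T
  omega

theorem IsGradientMatrix.pivotElimination_mul [DecidableEq α] [DecidableEq β]
    {B : Matrix α β ℝ} (hB : IsGradientMatrix B) {i : α} {j : β} (hij : B i j ≠ 0) :
    IsGradientMatrix (pivotElimination B i j * B) := by
  intro k
  have row_eq : (pivotElimination B i j * B) k = B k - (B k j / B i j) • B i :=
    funext (pivotElimination_mul_apply B i j B k)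
  rw [row_eq]
  constructor
  · by_cases hkj : B k j = 0
    · simpa [hkj] using (hB k).1
    · have card_row := card_ne_zero_sub_div_smul_add_two_le hkj hij
      have card_k := (hB k).1
      have card_i := (hB i).1
      omega
  · simp [← mul_sum, (hB k).2, (hB i).2]

theorem IsGradientMatrix.submatrix {γ δ : Type*} [Fintype γ] [Fintype δ] [DecidableEq β]
    [DecidableEq δ] {B : Matrix α β ℝ} (hB : IsGradientMatrix B) (f : γ → α) {g : δ → β}
    (hg : Function.Injective g) (hzero : ∀ k, ∀ q ∉ Set.range g, B (f k) q = 0) :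
    IsGradientMatrix (B.submatrix f g) := by
  intro k
  constructor
  · refine (card_le_card_of_injOn g ?_ hg.injOn).trans (hB (f k)).1
    exact fun q hq => (mem_filter_univ _).2 ((mem_filter_univ q).1 hq)
  · exact (Fintype.sum_of_injective g hg _ _ (hzero k) fun _ => rfl).trans (hB (f k)).2

theorem IsGradientMatrix.reducedGradient [DecidableEq α] [DecidableEq β] {B : Matrix α β ℝ}
    (hB : IsGradientMatrix B) {i : α} {j : β} (hij : B i j ≠ 0) :
    IsGradientMatrix (reducedGradient B i j) := by
  refine (hB.pivotElimination_mul hij).submatrix id Subtype.val_injective fun k q hq => ?_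
  obtain rfl : q = j := by simpa using hq
  exact pivotElimination_mul_apply_pivot hij k

end Gradient

section SchurComplement

variable {n m : ℕ} (A : Matrix (Fin n) (Fin n) ℝ) (B : Matrix (Fin n) (Fin m) ℝ)
  (i : Fin n) (j : Fin m)

theorem saddleMatrix_submatrix_pivotEmb :
    (saddleMatrix A B).submatrix (pivotEmb i j) (pivotEmb i j) = !![A i i, B i j; B i j, 0] := by
  ext p q
  fin_cases p <;> fin_cases q <;> rfl

variable {B i j}

theorem schurPivot2_eq_fromBlocks (hij : B i j ≠ 0) :
    schurPivot2 A B i j =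
      fromBlocks (pivotElimination B i j * A * (pivotElimination B i j)ᵀ)
        (reducedGradient B i j) (reducedGradient B i j)ᵀ 0 := by
  rw [schurPivot2, saddleMatrix_submatrix_pivotEmb]
  ext (p | p) (q | q) <;>
    rw [Matrix.sub_apply, mul_inv_pivot_mul_apply _ hij] <;>
    simp only [saddleMatrix, restEmb, pivotEmb, submatrix_apply, Sum.map_inl, Sum.map_inr,
      fromBlocks_apply₁₁, fromBlocks_apply₁₂, fromBlocks_apply₂₁, fromBlocks_apply₂₂,
      cons_val_zero, cons_val_one, cons_val_fin_one, transpose_apply, Matrix.zero_apply,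
      mul_transpose_pivotElimination_apply, pivotElimination_mul_apply,
      reducedGradient_apply] <;>
    ring

end SchurComplement

/-- If `K` is an F-matrix and `B i j ≠ 0`, then the 2×2 pivot
`P = [[A_ii, B_ij], [B_ij, 0]]` is invertible and the Schur complement of `K`
with respect to this pivot is again an F-matrix; in particular its
pressure–pressure block vanishes. -/
theorem schur_complement_of_Fmatrix_is_Fmatrix
    {n m : ℕ} (A : Matrix (Fin n) (Fin n) ℝ) (B : Matrix (Fin n) (Fin m) ℝ)
    (hA : IsPosDefQuad A) (hB : IsGradientMatrix B)
    (i : Fin n) (j : Fin m) (hij : B i j ≠ 0) :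
    IsUnit ((saddleMatrix A B).submatrix (pivotEmb i j) (pivotEmb i j)) ∧
    (∃ (A' : Matrix {i' : Fin n // i' ≠ i} {i' : Fin n // i' ≠ i} ℝ)
       (B' : Matrix {i' : Fin n // i' ≠ i} {j' : Fin m // j' ≠ j} ℝ),
        schurPivot2 A B i j = Matrix.fromBlocks A' B' B'ᵀ 0 ∧
        IsPosDefQuad A' ∧ IsGradientMatrix B') ∧
    (∀ (j₁ j₂ : {j' : Fin m // j' ≠ j}),
        schurPivot2 A B i j (Sum.inr j₁) (Sum.inr j₂) = 0) := by
  have schur_eq := schurPivot2_eq_fromBlocks A hij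
  refine ⟨?_, ⟨_, _, schur_eq, ?_, hB.reducedGradient hij⟩, fun j₁ j₂ => ?_⟩
  · rw [saddleMatrix_submatrix_pivotEmb]
    exact isUnit_pivot_iff.2 hij.isUnit
  · exact hA.mul_mul_transpose_same (vecMul_pivotElimination_injective B i j)
  · rw [schur_eq, fromBlocks_apply₂₂, Matrix.zero_apply]
end

section
/- Let K = [[A, B],[Bᵀ, 0]] be an F-matrix with A ∈ ℝ^{n×n}, B ∈ ℝ^{n×m}, and let i, j be indices with β := B_{ij} ≠ 0. Let b ∈ ℝ^{m−1} be row i of B with entry j removed, let b̂ ∈ ℝ^{n−1} be column j of B with entry i removed, and let B̂ ∈ ℝ^{(n−1)×(m−1)} be B with row i and column j removed. Then the velocity–pressure block of the Schur complement of K with respect to the 2×2 pivot on indices (velocity i, pressure j) equals B̂ − (1/β) b̂ bᵀ. In particular, this block depends only on B, i and j, and not on the entries of A: two F-matrices with the same B-part but different positive definite A-parts yield identical velocity–pressure blocks in their Schur complements. -/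
open Matrix

/-- The Schur complement `K_RR − K_RP K_PP⁻¹ K_PR` of a square matrix `K`. The pivot indices `P`
and the remaining indices `R` are given as families `p` and `r`, which fixes their order. -/
noncomputable def schurComplement {ι κ ρ α : Type*} [Fintype κ] [DecidableEq κ] [CommRing α]
    (K : Matrix ι ι α) (p : κ → ι) (r : ρ → ι) : Matrix ρ ρ α :=
  K.submatrix r r - K.submatrix r p * (K.submatrix p p)⁻¹ * K.submatrix p r

theorem schurComplement_apply_of_mulVec_eq {ι κ ρ α : Type*} [Fintype κ] [DecidableEq κ]
    [CommRing α] {K : Matrix ι ι α} {p : κ → ι} {r : ρ → ι} (hP : IsUnit (K.submatrix p p).det)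
    (s t : ρ) {y : κ → α} (hy : K.submatrix p p *ᵥ y = fun k => K (p k) (r t)) :
    schurComplement K p r s t = K (r s) (r t) - ∑ k, K (r s) (p k) * y k := by
  have solution_eq : (K.submatrix p p)⁻¹ *ᵥ (fun k => K (p k) (r t)) = y := by
    rw [← hy, mulVec_mulVec, nonsing_inv_mul _ hP, one_mulVec]
  rw [schurComplement, Matrix.mul_assoc, ← solution_eq]
  rfl

theorem schurComplement_pair_apply {ι ρ F : Type*} [Field F] {K : Matrix ι ι F} {v q : ι}
    (hqq : K q q = 0) (hvq : K v q ≠ 0) (hqv : K q v ≠ 0) {r : ρ → ι} (s : ρ) {t : ρ}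
    (hqt : K q (r t) = 0) :
    schurComplement K ![v, q] r s t = K (r s) (r t) - K (r s) q * (K v (r t) / K v q) := by
  have pivot_det : (K.submatrix ![v, q] ![v, q]).det = -(K v q * K q v) := by
    rw [det_fin_two]
    simp [hqq]
  have pivot_isUnit : IsUnit (K.submatrix ![v, q] ![v, q]).det := by
    rw [pivot_det]
    exact (neg_ne_zero.mpr (mul_ne_zero hvq hqv)).isUnit
  -- The zeros in row `q` force the first entry of the solution to vanish, and with it drop out
  -- `K v v` and column `v` of `K`: these are the entries of `A` in a saddle point matrix.
  have pivot_solution : K.submatrix ![v, q] ![v, q] *ᵥ ![0, K v (r t) / K v q] =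
      fun k => K (![v, q] k) (r t) := by
    ext k
    fin_cases k <;> simp [mulVec, dotProduct, hqq, hqt, mul_div_cancel₀, hvq]
  rw [schurComplement_apply_of_mulVec_eq pivot_isUnit s t pivot_solution]
  simp

theorem schur_VP_block_independent_of_A_general {V Q V' Q' F : Type*} [Field F]
    (A : Matrix V V F) {B : Matrix V Q F} {C : Matrix Q V F} {i : V} {j : Q}
    (hB : B i j ≠ 0) (hC : C j i ≠ 0) (r : V' → V) (s : Q' → Q) :
    (schurComplement (fromBlocks A B C 0) ![Sum.inl i, Sum.inr j] (Sum.map r s)).toBlocks₁₂ =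
      B.submatrix r s - (1 / B i j) • vecMulVec (fun i' => B (r i') j) (fun j' => B i (s j')) := by
  ext i' j'
  calc schurComplement (fromBlocks A B C 0) ![Sum.inl i, Sum.inr j] (Sum.map r s)
        (Sum.inl i') (Sum.inr j')
      = B (r i') (s j') - B (r i') j * (B i (s j') / B i j) :=
        schurComplement_pair_apply (K := fromBlocks A B C 0) (v := Sum.inl i)
          (q := Sum.inr j) (r := Sum.map r s) (t := Sum.inr j') rfl hB hC (Sum.inl i') rfl
    _ = B (r i') (s j') - (1 / B i j) * (B (r i') j * B i (s j')) := by ring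

/-- The velocity–pressure block of the Schur complement with
respect to the 2×2 pivot on (velocity `i`, pressure `j`) equals
`B̂ − (1/β) b̂ bᵀ`, i.e. entrywise `B i' j' − (B i' j / B i j) * B i j'`.
In particular it does not depend on the positive definite `A`-part: two
F-matrices with the same `B`-part have identical velocity–pressure blocks. -/
theorem schur_VP_block_independent_of_A
    {n m : ℕ} (A : Matrix (Fin n) (Fin n) ℝ) (B : Matrix (Fin n) (Fin m) ℝ)
    (hA : IsPosDefQuad A) (hB : IsGradientMatrix B)
    (i : Fin n) (j : Fin m) (hij : B i j ≠ 0) :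
    (∀ (i' : {i' : Fin n // i' ≠ i}) (j' : {j' : Fin m // j' ≠ j}),
        schurPivot2 A B i j (Sum.inl i') (Sum.inr j') =
          B i'.1 j'.1 - (1 / B i j) * (B i'.1 j * B i j'.1)) ∧
    (∀ (A₁ A₂ : Matrix (Fin n) (Fin n) ℝ), IsPosDefQuad A₁ → IsPosDefQuad A₂ →
      ∀ (i' : {i' : Fin n // i' ≠ i}) (j' : {j' : Fin m // j' ≠ j}),
        schurPivot2 A₁ B i j (Sum.inl i') (Sum.inr j') =
          schurPivot2 A₂ B i j (Sum.inl i') (Sum.inr j')) := by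
  -- `schurPivot2` unfolds to the `schurComplement` in `block_eq`, entry by entry.
  have block_eq A' := schur_VP_block_independent_of_A_general A' (C := Bᵀ) hij hij
    (Subtype.val (p := (· ≠ i))) (Subtype.val (p := (· ≠ j)))
  exact ⟨congrFun₂ (block_eq A),
    fun A₁ A₂ _ _ => congrFun₂ ((block_eq A₁).trans (block_eq A₂).symm)⟩
end

section
/- Let K = [[A, B],[Bᵀ, 0]] be an F-matrix with A ∈ ℝ^{n×n}, B ∈ ℝ^{n×m}, and let i, j be indices with B_{ij} ≠ 0. Then A_{ii} > 0, and the Schur complement of K with respect to the 1×1 pivot A_{ii} (eliminating velocity i alone) has entry −B_{ij}²/A_{ii} ≠ 0 in the diagonal position corresponding to pressure j. Consequently the pressure–pressure block of this Schur complement is not the zero matrix, so the Schur complement is not a saddle point matrix of the form [[A', B'],[B'ᵀ, 0]] and in particular is not an F-matrix. -/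
open Matrix

/-- The embedding of the remaining indices after eliminating velocity `i` alone:
velocities other than `i` followed by all pressures. -/
def restEmb1 {n m : ℕ} (i : Fin n) :
    ({i' : Fin n // i' ≠ i} ⊕ Fin m) → (Fin n ⊕ Fin m) :=
  Sum.map Subtype.val id

/-- The Schur complement `K_RR − K_{R,i} (A_ii)⁻¹ K_{i,R}` of the saddle point
matrix with respect to the 1×1 pivot `A i i` (eliminating velocity `i` alone). -/
noncomputable def schurPivot1 {n m : ℕ} (A : Matrix (Fin n) (Fin n) ℝ)
    (B : Matrix (Fin n) (Fin m) ℝ) (i : Fin n) :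
    Matrix ({i' : Fin n // i' ≠ i} ⊕ Fin m) ({i' : Fin n // i' ≠ i} ⊕ Fin m) ℝ :=
  fun k l =>
    saddleMatrix A B (restEmb1 i k) (restEmb1 i l) -
      saddleMatrix A B (restEmb1 i k) (Sum.inl i) * (A i i)⁻¹ *
        saddleMatrix A B (Sum.inl i) (restEmb1 i l)

theorem IsPosDefQuad.diag_pos {α : Type*} [Fintype α] {A : Matrix α α ℝ}
    (hA : IsPosDefQuad A) (i : α) : 0 < A i i := by
  classical
  simpa using hA (Pi.single i 1) (Pi.single_ne_zero_iff.mpr one_ne_zero)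

section

variable {n m : ℕ} (A : Matrix (Fin n) (Fin n) ℝ) (B : Matrix (Fin n) (Fin m) ℝ)

theorem toBlocks₂₂_schurPivot1 (i : Fin n) :
    (schurPivot1 A B i).toBlocks₂₂ = -((A i i)⁻¹ • vecMulVec (B i) (B i)) := by
  ext j₁ j₂
  calc
    (schurPivot1 A B i).toBlocks₂₂ j₁ j₂ = 0 - B i j₁ * (A i i)⁻¹ * B i j₂ := rfl
    _ = -((A i i)⁻¹ * (B i j₁ * B i j₂)) := by ring

theorem schurPivot1_inr_inr_self (i : Fin n) (j : Fin m) :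
    schurPivot1 A B i (Sum.inr j) (Sum.inr j) = -(B i j) ^ 2 / A i i :=
  calc
    schurPivot1 A B i (Sum.inr j) (Sum.inr j) = -((A i i)⁻¹ * (B i j * B i j)) :=
      congr_fun₂ (toBlocks₂₂_schurPivot1 A B i) j j
    _ = -(B i j) ^ 2 / A i i := by ring

theorem schur_of_single_velocity_pivot_not_Fmatrix_general
    {i : Fin n} (hi : A i i ≠ 0) {j : Fin m} (hij : B i j ≠ 0) :
    schurPivot1 A B i (Sum.inr j) (Sum.inr j) = -(B i j) ^ 2 / A i i ∧
    schurPivot1 A B i (Sum.inr j) (Sum.inr j) ≠ 0 ∧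
    ¬ (∀ j₁ j₂ : Fin m, schurPivot1 A B i (Sum.inr j₁) (Sum.inr j₂) = 0) ∧
    ¬ ∃ (A' : Matrix {i' : Fin n // i' ≠ i} {i' : Fin n // i' ≠ i} ℝ)
        (B' : Matrix {i' : Fin n // i' ≠ i} (Fin m) ℝ),
          schurPivot1 A B i = Matrix.fromBlocks A' B' B'ᵀ 0 := by
  have entry_eq := schurPivot1_inr_inr_self A B i j
  have entry_ne_zero : schurPivot1 A B i (Sum.inr j) (Sum.inr j) ≠ 0 :=
    entry_eq ▸ div_ne_zero (neg_ne_zero.mpr (pow_ne_zero 2 hij)) hi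
  refine ⟨entry_eq, entry_ne_zero, fun h => entry_ne_zero (h j j), ?_⟩
  rintro ⟨A', B', h⟩
  exact entry_ne_zero (congr_fun₂ h (Sum.inr j) (Sum.inr j))

end

/-- If a velocity `i` coupled to a pressure `j` (`B i j ≠ 0`) is
eliminated alone, then `A i i > 0`, the Schur complement has the nonzero entry
`−B i j ² / A i i` on the diagonal position of pressure `j`, so its
pressure–pressure block is nonzero and it is not a saddle point matrix of the
form `[[A', B'], [B'ᵀ, 0]]` (in particular not an F-matrix). -/
theorem schur_of_single_velocity_pivot_not_Fmatrix
    {n m : ℕ} (A : Matrix (Fin n) (Fin n) ℝ) (B : Matrix (Fin n) (Fin m) ℝ)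
    (hA : IsPosDefQuad A) (hB : IsGradientMatrix B)
    (i : Fin n) (j : Fin m) (hij : B i j ≠ 0) :
    0 < A i i ∧
    schurPivot1 A B i (Sum.inr j) (Sum.inr j) = -(B i j) ^ 2 / A i i ∧
    schurPivot1 A B i (Sum.inr j) (Sum.inr j) ≠ 0 ∧
    ¬ (∀ j₁ j₂ : Fin m, schurPivot1 A B i (Sum.inr j₁) (Sum.inr j₂) = 0) ∧
    ¬ ∃ (A' : Matrix {i' : Fin n // i' ≠ i} {i' : Fin n // i' ≠ i} ℝ)
        (B' : Matrix {i' : Fin n // i' ≠ i} (Fin m) ℝ),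
          schurPivot1 A B i = Matrix.fromBlocks A' B' B'ᵀ 0 :=
  ⟨hA.diag_pos i, schur_of_single_velocity_pivot_not_Fmatrix_general A B (hA.diag_pos i).ne' hij⟩
end

section
/- Let A, Ã ∈ ℝ^{n×n} be symmetric positive definite, let B ∈ ℝ^{n×m}, and set K = [[A, B],[Bᵀ, 0]] and K̃ = [[Ã, B],[Bᵀ, 0]]. Suppose λ ∈ ℝ and x = (x₁, x₂) ∈ ℝ^{n+m} satisfy K x = λ K̃ x with λ ≠ 1 and x₁ ≠ 0. Then Bᵀx₁ = 0, and λ satisfies min_{y≠0} (yᵀAy)/(yᵀÃy) ≤ λ ≤ max_{y≠0} (yᵀAy)/(yᵀÃy). In other words, every generalized eigenvalue of the preconditioned saddle point matrix other than 1 is bounded between the extreme generalized eigenvalues of the pencil (A, Ã). -/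
open Matrix

/-!
The second block row of `K x = λ K̃ x` reads `(1 - λ) Bᵀ x₁ = 0`, so `x₁ ∈ ker Bᵀ`. Pairing the
first block row with `x₁` then kills the `B x₂` terms and leaves `x₁ᵀ A x₁ = λ x₁ᵀ Ã x₁`: thus `λ`
is itself a value of the Rayleigh quotient of `(A, Ã)`. By homogeneity these values are already
taken on the unit sphere, so they form a compact set, and its infimum and supremum bound `λ`.
-/

section SaddlePoint

variable {R ι κ : Type*}

/-- The saddle point matrix `[[A, B], [Bᵀ, 0]]` with leading block `A` and constraint block `B`. -/
def saddlePointMatrix [Zero R] (A : Matrix ι ι R) (B : Matrix ι κ R) : Matrix (ι ⊕ κ) (ι ⊕ κ) R :=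
  fromBlocks A B Bᵀ 0

variable [Fintype ι] [Fintype κ]

lemma saddlePointMatrix_mulVec_eq_smul_iff [CommSemiring R] {A M : Matrix ι ι R}
    {B : Matrix ι κ R} {c : R} {x : ι ⊕ κ → R} :
    saddlePointMatrix A B *ᵥ x = c • (saddlePointMatrix M B *ᵥ x) ↔
      A *ᵥ (x ∘ Sum.inl) + B *ᵥ (x ∘ Sum.inr) =
          c • (M *ᵥ (x ∘ Sum.inl) + B *ᵥ (x ∘ Sum.inr)) ∧
        Bᵀ *ᵥ (x ∘ Sum.inl) = c • (Bᵀ *ᵥ (x ∘ Sum.inl)) := by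
  simp only [saddlePointMatrix, fromBlocks_mulVec, zero_mulVec, add_zero, funext_iff, Sum.forall,
    Pi.smul_apply, Sum.elim_inl, Sum.elim_inr]

lemma dotProduct_mulVec_eq_zero_of_transpose_mulVec_eq_zero [CommSemiring R] {B : Matrix ι κ R}
    {u : ι → R} (hu : Bᵀ *ᵥ u = 0) (v : κ → R) : u ⬝ᵥ B *ᵥ v = 0 := by
  rw [dotProduct_mulVec, ← mulVec_transpose, hu, zero_dotProduct]

lemma dotProduct_mulVec_eq_mul_of_transpose_mulVec_eq_zero [CommSemiring R] {A M : Matrix ι ι R}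
    {B : Matrix ι κ R} {c : R} {u : ι → R} {v : κ → R} (hu : Bᵀ *ᵥ u = 0)
    (h : A *ᵥ u + B *ᵥ v = c • (M *ᵥ u + B *ᵥ v)) :
    u ⬝ᵥ A *ᵥ u = c * (u ⬝ᵥ M *ᵥ u) := by
  have huv : u ⬝ᵥ B *ᵥ v = 0 := dotProduct_mulVec_eq_zero_of_transpose_mulVec_eq_zero hu v
  calc u ⬝ᵥ A *ᵥ u = u ⬝ᵥ (A *ᵥ u + B *ᵥ v) := by rw [dotProduct_add, huv, add_zero]
    _ = u ⬝ᵥ (c • (M *ᵥ u + B *ᵥ v)) := by rw [h]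
    _ = c * (u ⬝ᵥ M *ᵥ u) := by rw [dotProduct_smul, dotProduct_add, huv, add_zero, smul_eq_mul]

end SaddlePoint

section RayleighQuotient

variable {ι : Type*} [Fintype ι]

/-- The Rayleigh quotient `yᵀ A y / yᵀ M y` of the pencil `(A, M)`, equal to the junk value `0`
where `yᵀ M y = 0`. -/
def pencilRayleighQuotient {F : Type*} [Field F] (A M : Matrix ι ι F) (y : ι → F) : F :=
  (y ⬝ᵥ A *ᵥ y) / (y ⬝ᵥ M *ᵥ y)

/-- The set of values of the Rayleigh quotient of the pencil `(A, M)` at nonzero vectors. Its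
least and greatest elements are the extreme generalized eigenvalues when `A` and `M` are real
symmetric and `M` is positive definite. -/
def pencilRayleighRange {F : Type*} [Field F] (A M : Matrix ι ι F) : Set F :=
  {r | ∃ y : ι → F, y ≠ 0 ∧ r = pencilRayleighQuotient A M y}

lemma pencilRayleighQuotient_smul {F : Type*} [Field F] (A M : Matrix ι ι F) {c : F} (hc : c ≠ 0)
    (y : ι → F) : pencilRayleighQuotient A M (c • y) = pencilRayleighQuotient A M y := by
  simp only [pencilRayleighQuotient, mulVec_smul, dotProduct_smul, smul_dotProduct, smul_eq_mul,
    mul_div_mul_left _ _ hc]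

lemma continuousOn_pencilRayleighQuotient {F : Type*} [Field F] [TopologicalSpace F]
    [IsTopologicalDivisionRing F] (A M : Matrix ι ι F) :
    ContinuousOn (pencilRayleighQuotient A M) {y | y ⬝ᵥ M *ᵥ y ≠ 0} := by
  have continuous_form (N : Matrix ι ι F) : Continuous fun y : ι → F => y ⬝ᵥ N *ᵥ y :=
    continuous_id.dotProduct (continuous_const.matrix_mulVec continuous_id)
  exact (continuous_form A).continuousOn.div (continuous_form M).continuousOn fun _ hy => hy

lemma pencilRayleighRange_eq_image_sphere {𝕜 : Type*} [RCLike 𝕜] (A M : Matrix ι ι 𝕜) :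
    pencilRayleighRange A M = pencilRayleighQuotient A M '' Metric.sphere 0 1 := by
  apply Set.Subset.antisymm
  · rintro _ ⟨y, hy, rfl⟩
    have h_inv : (‖y‖ : 𝕜)⁻¹ ≠ 0 :=
      inv_ne_zero (RCLike.ofReal_ne_zero.mpr (norm_ne_zero_iff.mpr hy))
    exact ⟨(‖y‖ : 𝕜)⁻¹ • y, mem_sphere_zero_iff_norm.mpr (norm_smul_inv_norm hy),
      pencilRayleighQuotient_smul A M h_inv y⟩
  · rintro _ ⟨y, hy, rfl⟩
    exact ⟨y, ne_zero_of_mem_unit_sphere ⟨y, hy⟩, rfl⟩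

lemma isCompact_pencilRayleighRange {𝕜 : Type*} [RCLike 𝕜] (A : Matrix ι ι 𝕜) {M : Matrix ι ι 𝕜}
    (hM : ∀ y : ι → 𝕜, y ≠ 0 → y ⬝ᵥ M *ᵥ y ≠ 0) : IsCompact (pencilRayleighRange A M) := by
  have sphere_subset : Metric.sphere 0 1 ⊆ {y : ι → 𝕜 | y ⬝ᵥ M *ᵥ y ≠ 0} :=
    fun y hy => hM y (ne_zero_of_mem_unit_sphere ⟨y, hy⟩)
  rw [pencilRayleighRange_eq_image_sphere]
  exact (isCompact_sphere 0 1).image_of_continuousOn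
    ((continuousOn_pencilRayleighQuotient A M).mono sphere_subset)

end RayleighQuotient

section Eigenvalues

variable {ι κ : Type*} [Fintype ι] [Fintype κ]

lemma transpose_mulVec_eq_zero_of_saddlePointMatrix_mulVec_eq_smul {R : Type*} [CommRing R]
    [IsDomain R] {A M : Matrix ι ι R} {B : Matrix ι κ R} {c : R} {x : ι ⊕ κ → R}
    (hx : saddlePointMatrix A B *ᵥ x = c • (saddlePointMatrix M B *ᵥ x)) (hc : c ≠ 1) :
    Bᵀ *ᵥ (x ∘ Sum.inl) = 0 := by
  obtain ⟨-, h_lower⟩ := saddlePointMatrix_mulVec_eq_smul_iff.mp hx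
  have h_smul : (1 - c) • (Bᵀ *ᵥ (x ∘ Sum.inl)) = 0 := by
    rw [sub_smul, one_smul, ← h_lower, sub_self]
  exact (smul_eq_zero.mp h_smul).resolve_left (sub_ne_zero.mpr hc.symm)

lemma mem_pencilRayleighRange_of_saddlePointMatrix_mulVec_eq_smul {F : Type*} [Field F]
    {A M : Matrix ι ι F} {B : Matrix ι κ F} {c : F} {x : ι ⊕ κ → F}
    (hx : saddlePointMatrix A B *ᵥ x = c • (saddlePointMatrix M B *ᵥ x)) (hc : c ≠ 1)
    (hx₁ : (x ∘ Sum.inl) ⬝ᵥ M *ᵥ (x ∘ Sum.inl) ≠ 0) : c ∈ pencilRayleighRange A M := by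
  have h_ker : Bᵀ *ᵥ (x ∘ Sum.inl) = 0 :=
    transpose_mulVec_eq_zero_of_saddlePointMatrix_mulVec_eq_smul hx hc
  obtain ⟨h_upper, -⟩ := saddlePointMatrix_mulVec_eq_smul_iff.mp hx
  have h_ne : x ∘ Sum.inl ≠ 0 := fun h => hx₁ (by rw [h, zero_dotProduct])
  exact ⟨x ∘ Sum.inl, h_ne, eq_div_of_mul_eq hx₁
    (dotProduct_mulVec_eq_mul_of_transpose_mulVec_eq_zero h_ker h_upper).symm⟩

theorem saddle_eigenvalues_bounded_by_pencil_general {A M : Matrix ι ι ℝ} {B : Matrix ι κ ℝ}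
    {c : ℝ} {x : ι ⊕ κ → ℝ} (hM : ∀ y : ι → ℝ, y ≠ 0 → y ⬝ᵥ M *ᵥ y ≠ 0)
    (hx : saddlePointMatrix A B *ᵥ x = c • (saddlePointMatrix M B *ᵥ x)) (hc : c ≠ 1)
    (hx₁ : x ∘ Sum.inl ≠ 0) :
    Bᵀ *ᵥ (x ∘ Sum.inl) = 0 ∧
      sInf (pencilRayleighRange A M) ≤ c ∧ c ≤ sSup (pencilRayleighRange A M) := by
  have h_mem : c ∈ pencilRayleighRange A M :=
    mem_pencilRayleighRange_of_saddlePointMatrix_mulVec_eq_smul hx hc (hM _ hx₁)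
  have h_compact : IsCompact (pencilRayleighRange A M) := isCompact_pencilRayleighRange A hM
  exact ⟨transpose_mulVec_eq_zero_of_saddlePointMatrix_mulVec_eq_smul hx hc,
    csInf_le h_compact.bddBelow h_mem, le_csSup h_compact.bddAbove h_mem⟩

end Eigenvalues

/-- Let `A, Ã` be symmetric positive definite, `K = [[A,B],[Bᵀ,0]]`
and `K̃ = [[Ã,B],[Bᵀ,0]]`. If `K x = λ K̃ x` with `λ ≠ 1` and velocity part
`x₁ ≠ 0`, then `Bᵀ x₁ = 0` and `λ` lies between the extreme generalized Rayleigh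
quotients of the pencil `(A, Ã)`. -/
theorem saddle_eigenvalues_bounded_by_pencil
    {n m : ℕ} (A Atil : Matrix (Fin n) (Fin n) ℝ) (B : Matrix (Fin n) (Fin m) ℝ)
    (hA : A.PosDef) (hAtil : Atil.PosDef)
    (lam : ℝ) (x : (Fin n ⊕ Fin m) → ℝ)
    (heig : (Matrix.fromBlocks A B Bᵀ 0).mulVec x =
              lam • (Matrix.fromBlocks Atil B Bᵀ 0).mulVec x)
    (hlam : lam ≠ 1) (hx1 : (fun i => x (Sum.inl i)) ≠ 0) :
    Bᵀ.mulVec (fun i => x (Sum.inl i)) = 0 ∧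
    sInf {r : ℝ | ∃ y : Fin n → ℝ, y ≠ 0 ∧
        r = (y ⬝ᵥ A.mulVec y) / (y ⬝ᵥ Atil.mulVec y)} ≤ lam ∧
    lam ≤ sSup {r : ℝ | ∃ y : Fin n → ℝ, y ≠ 0 ∧
        r = (y ⬝ᵥ A.mulVec y) / (y ⬝ᵥ Atil.mulVec y)} :=
  saddle_eigenvalues_bounded_by_pencil_general
    (fun _ hy => (hAtil.dotProduct_mulVec_pos hy).ne') heig hlam hx1
end

section
/- Let A11 ∈ ℝ^{p×p} be symmetric positive definite, let A22 ∈ ℝ^{q×q} be symmetric positive semidefinite, let A12 ∈ ℝ^{p×q}, and let γ ≥ 0. Suppose the strengthened Cauchy–Schwarz inequality |xᵀ A12 y| ≤ γ (xᵀA11x)^{1/2} (yᵀA22y)^{1/2} holds for all x ∈ ℝ^p and y ∈ ℝ^q. Then γ² A22 − A12ᵀ A11^{−1} A12 is positive semidefinite, i.e., A12ᵀ A11^{−1} A12 ⪯ γ² A22 in the Loewner order. -/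
open Matrix

/-! The strengthened Cauchy–Schwarz inequality bounds the cross terms in the quadratic form of the
block matrix `[[A, B], [Bᴴ, γ² D]]`, so that the form is at least `(√(xᴴAx) - |γ| √(yᴴDy))²` at
`(x, y)`. The block matrix is thus positive semidefinite, and so is the Schur complement of `A`. -/

section BlockMatrix

variable {m n : Type*} [Fintype m] [Fintype n]

theorem star_sumElim_dotProduct_fromBlocks_mulVec {R : Type*} [NonUnitalSemiring R] [StarRing R]
    (A : Matrix m m R) (B : Matrix m n R) (D : Matrix n n R) (x : m → R) (y : n → R) :
    star (Sum.elim x y) ⬝ᵥ fromBlocks A B Bᴴ D *ᵥ Sum.elim x y =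
      star x ⬝ᵥ A *ᵥ x + (star x ⬝ᵥ B *ᵥ y + star (star x ⬝ᵥ B *ᵥ y)) + star y ⬝ᵥ D *ᵥ y := by
  have hcross : star y ⬝ᵥ Bᴴ *ᵥ x = star (star x ⬝ᵥ B *ᵥ y) := by
    rw [star_dotProduct, star_mulVec, conjTranspose_conjTranspose, ← dotProduct_mulVec]
  simp only [Function.star_sumElim, fromBlocks_mulVec, Sum.elim_comp_inl, Sum.elim_comp_inr,
    sumElim_dotProduct_sumElim, dotProduct_add, hcross, add_assoc]

open scoped ComplexOrder

variable {𝕜 : Type*} [RCLike 𝕜]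

theorem posSemidef_fromBlocks_of_norm_star_dotProduct_mulVec_le
    {A : Matrix m m 𝕜} {B : Matrix m n 𝕜} {D : Matrix n n 𝕜}
    (hA : A.PosSemidef) (hD : D.PosSemidef)
    (hCS : ∀ x y, ‖star x ⬝ᵥ B *ᵥ y‖ ≤
      √(RCLike.re (star x ⬝ᵥ A *ᵥ x)) * √(RCLike.re (star y ⬝ᵥ D *ᵥ y))) :
    (fromBlocks A B Bᴴ D).PosSemidef := by
  have hM : (fromBlocks A B Bᴴ D).IsHermitian := hA.isHermitian.fromBlocks rfl hD.isHermitian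
  refine .of_dotProduct_mulVec_nonneg hM fun v ↦
    RCLike.nonneg_iff.mpr ⟨?_, hM.im_star_dotProduct_mulVec_self v⟩
  obtain ⟨x, y, rfl⟩ : ∃ x y, v = Sum.elim x y := ⟨_, _, (Sum.elim_comp_inl_inr v).symm⟩
  set a := RCLike.re (star x ⬝ᵥ A *ᵥ x)
  set d := RCLike.re (star y ⬝ᵥ D *ᵥ y)
  set z := star x ⬝ᵥ B *ᵥ y
  have hz : -(√a * √d) ≤ RCLike.re z :=
    (abs_le.mp ((RCLike.abs_re_le_norm z).trans (hCS x y))).1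
  calc
    0 ≤ (√a - √d) ^ 2 := sq_nonneg _
    _ = a - 2 * (√a * √d) + d := by
      rw [sub_sq, Real.sq_sqrt (hA.re_dotProduct_nonneg x),
        Real.sq_sqrt (hD.re_dotProduct_nonneg y), mul_assoc]
    _ ≤ a + 2 * RCLike.re z + d := by linarith
    _ = RCLike.re (star (Sum.elim x y) ⬝ᵥ fromBlocks A B Bᴴ D *ᵥ Sum.elim x y) := by
      simp only [star_sumElim_dotProduct_fromBlocks_mulVec, map_add, RCLike.star_def,
        RCLike.conj_re, two_mul, a, d, z]

theorem strengthened_CS_implies_loewner_bound_general [DecidableEq m]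
    {A : Matrix m m 𝕜} {B : Matrix m n 𝕜} {D : Matrix n n 𝕜} {γ : ℝ}
    (hA : A.PosDef) (hD : D.PosSemidef)
    (hCS : ∀ x y, ‖star x ⬝ᵥ B *ᵥ y‖ ≤
      γ * √(RCLike.re (star x ⬝ᵥ A *ᵥ x)) * √(RCLike.re (star y ⬝ᵥ D *ᵥ y))) :
    (γ ^ 2 • D - Bᴴ * A⁻¹ * B).PosSemidef := by
  have : Invertible A := hA.isUnit.invertible
  refine (PosDef.fromBlocks₁₁ B (γ ^ 2 • D) hA).mp <|
    posSemidef_fromBlocks_of_norm_star_dotProduct_mulVec_le hA.posSemidef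
      (hD.smul (sq_nonneg γ)) fun x y ↦ ?_
  set a := RCLike.re (star x ⬝ᵥ A *ᵥ x)
  set d := RCLike.re (star y ⬝ᵥ D *ᵥ y)
  calc
    ‖star x ⬝ᵥ B *ᵥ y‖ ≤ γ * √a * √d := hCS x y
    _ ≤ |γ| * √a * √d := by gcongr; exact le_abs_self γ
    _ = √a * √(γ ^ 2 * d) := by
      rw [Real.sqrt_mul (sq_nonneg γ), Real.sqrt_sq_eq_abs]; ring
    _ = √a * √(RCLike.re (star y ⬝ᵥ (γ ^ 2 • D) *ᵥ y)) := by
      rw [smul_mulVec, dotProduct_smul, RCLike.smul_re]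

end BlockMatrix

/-- If `A11` is SPD, `A22` is PSD and the strengthened
Cauchy–Schwarz inequality `|xᵀ A12 y| ≤ γ √(xᵀA11x) √(yᵀA22y)` holds, then
`A12ᵀ A11⁻¹ A12 ⪯ γ² A22` in the Loewner order. -/
theorem strengthened_CS_implies_loewner_bound
    {p q : ℕ} (A11 : Matrix (Fin p) (Fin p) ℝ) (A22 : Matrix (Fin q) (Fin q) ℝ)
    (A12 : Matrix (Fin p) (Fin q) ℝ) (γ : ℝ) (hγ : 0 ≤ γ)
    (hA11 : A11.PosDef) (hA22 : A22.PosSemidef)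
    (hCS : ∀ (x : Fin p → ℝ) (y : Fin q → ℝ),
        |x ⬝ᵥ A12.mulVec y| ≤
          γ * Real.sqrt (x ⬝ᵥ A11.mulVec x) * Real.sqrt (y ⬝ᵥ A22.mulVec y)) :
    (γ ^ 2 • A22 - A12ᵀ * A11⁻¹ * A12).PosSemidef :=
  strengthened_CS_implies_loewner_bound_general hA11 hA22 hCS
end

section
/- Let d > 0 and let f : ℝ → ℝ be continuously differentiable on [0, d] with ∫₀^d f(s) ds = 0. Then ∫₀^d f'(s)² ds ≥ (π/d)² ∫₀^d f(s)² ds. -/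
open Real intervalIntegral

/-!
The primitive `F` of a mean-zero `f` vanishes at both ends, so it is enough to know Wirtinger's
inequality `k² ∫ F² ≤ ∫ F'²` for such `F`, where `k` is `π` divided by the length of the interval:
expanding `0 ≤ ∫ (f' + k² F)²` and integrating by parts then gives `k² ∫ f² ≤ ∫ f'²`.

Wirtinger's inequality is Jacobi's argument: if `T' = k² + T²`, then
`F'² - k² F² = (F' + T F)² - (T F²)'`. The solution `T x = k tan (k (x - c))`, with `c` the
midpoint, is finite on the closed interval only for `k` strictly below the optimal constant, which
is therefore reached by letting `k` increase to it.
-/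

open Filter MeasureTheory Set Topology

theorem memLp_restrict_of_continuousOn_isCompact {X E : Type*} [TopologicalSpace X]
    [MeasurableSpace X] [OpensMeasurableSpace X] [NormedAddCommGroup E] {μ : Measure X}
    [IsFiniteMeasureOnCompacts μ] {K : Set X} {f : X → E} (hK : IsCompact K)
    (hKm : MeasurableSet K) (hf : ContinuousOn f K) (p : ENNReal) :
    MemLp f p (μ.restrict K) := by
  have : IsFiniteMeasure (μ.restrict K) := isFiniteMeasure_restrict.2 hK.measure_lt_top.ne
  obtain ⟨C, hC⟩ := hK.exists_bound_of_continuousOn hf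
  exact .of_bound (hf.aestronglyMeasurable_of_isCompact hK hKm) C
    ((ae_restrict_iff' hKm).2 (.of_forall hC))

theorem hasDerivAt_integral_of_continuousOn_Icc {E : Type*} [NormedAddCommGroup E]
    [NormedSpace ℝ E] [CompleteSpace E] {f : ℝ → E} {a b x : ℝ}
    (hf : ContinuousOn f (Icc a b)) (hx : x ∈ Ioo a b) :
    HasDerivAt (fun t ↦ ∫ s in a..t, f s) (f x) x := by
  have hfx : ContinuousOn f (Icc a x) := hf.mono (Icc_subset_Icc_right hx.2.le)
  exact integral_hasDerivAt_right (hfx.intervalIntegrable_of_Icc hx.1.le)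
    ((hf.mono Ioo_subset_Icc_self).stronglyMeasurableAtFilter isOpen_Ioo x hx)
    (hf.continuousAt (Icc_mem_nhds hx.1 hx.2))

theorem hasDerivAt_const_mul_tan {k c x : ℝ} (hx : cos (k * (x - c)) ≠ 0) :
    HasDerivAt (fun y ↦ k * tan (k * (y - c))) (k ^ 2 + (k * tan (k * (x - c))) ^ 2) x := by
  have hlin : HasDerivAt (fun y ↦ k * (y - c)) k x := by
    simpa using ((hasDerivAt_id x).sub_const c).const_mul k
  refine (((hasDerivAt_tan hx).comp x hlin).const_mul k).congr_deriv ?_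
  rw [one_div, ← inv_one_add_tan_sq hx, inv_inv]
  ring

section Wirtinger

variable {a b : ℝ} {u u' : ℝ → ℝ}

theorem integral_riccati_mul_sq_le_integral_deriv_sq {T T' : ℝ → ℝ} (hab : a ≤ b)
    (hu : ContinuousOn u (Icc a b)) (huu' : ∀ x ∈ Ioo a b, HasDerivWithinAt u (u' x) (Ioi x) x)
    (hu' : MemLp u' 2 (volume.restrict (Icc a b))) (hua : u a = 0) (hub : u b = 0)
    (hT : ContinuousOn T (Icc a b)) (hTT' : ∀ x ∈ Ioo a b, HasDerivWithinAt T (T' x) (Ioi x) x)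
    (hT' : IntervalIntegrable T' volume a b) :
    ∫ x in a..b, (T' x - T x ^ 2) * u x ^ 2 ≤ ∫ x in a..b, u' x ^ 2 := by
  have hu'_int : IntervalIntegrable u' volume a b :=
    (intervalIntegrable_iff_integrableOn_Icc_of_le hab).2 (hu'.integrable one_le_two)
  have hu'_sq : IntervalIntegrable (fun x ↦ u' x ^ 2) volume a b :=
    (intervalIntegrable_iff_integrableOn_Icc_of_le hab).2 hu'.integrable_sq
  have hleft : IntervalIntegrable (fun x ↦ (T' x - T x ^ 2) * u x ^ 2) volume a b :=
    (hT'.sub ((hT.pow 2).intervalIntegrable_of_Icc hab)).mul_continuousOn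
      (by rw [uIcc_of_le hab]; exact hu.pow 2)
  have hderiv_int : IntervalIntegrable (fun x ↦ T' x * u x ^ 2 + 2 * T x * u x * u' x)
      volume a b :=
    (hT'.mul_continuousOn (by rw [uIcc_of_le hab]; fun_prop)).add
      (hu'_int.continuousOn_mul (by rw [uIcc_of_le hab]; fun_prop))
  have hboundary : ∫ x in a..b, (T' x * u x ^ 2 + 2 * T x * u x * u' x) = 0 := by
    rw [integral_eq_sub_of_hasDeriv_right_of_le hab (hT.mul (hu.pow 2)) (fun x hx ↦
      ((hTT' x hx).mul ((huu' x hx).pow 2)).congr_deriv (by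
        simp only [Pi.pow_apply, Nat.cast_ofNat]
        ring)) hderiv_int]
    simp [hua, hub]
  calc ∫ x in a..b, (T' x - T x ^ 2) * u x ^ 2
      ≤ ∫ x in a..b, (u' x ^ 2 + (T' x * u x ^ 2 + 2 * T x * u x * u' x)) :=
        integral_mono_on hab hleft (hu'_sq.add hderiv_int) fun x _ ↦ by
          linarith [sq_nonneg (u' x + T x * u x)]
    _ = ∫ x in a..b, u' x ^ 2 := by
        rw [integral_add hu'_sq hderiv_int, hboundary, add_zero]

theorem sq_mul_integral_sq_le_integral_deriv_sq_of_lt_pi {k : ℝ} (hab : a ≤ b) (hk : 0 ≤ k)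
    (hkπ : k * (b - a) < π) (hu : ContinuousOn u (Icc a b))
    (huu' : ∀ x ∈ Ioo a b, HasDerivWithinAt u (u' x) (Ioi x) x)
    (hu' : MemLp u' 2 (volume.restrict (Icc a b))) (hua : u a = 0) (hub : u b = 0) :
    k ^ 2 * ∫ x in a..b, u x ^ 2 ≤ ∫ x in a..b, u' x ^ 2 := by
  set T : ℝ → ℝ := fun x ↦ k * tan (k * (x - (a + b) / 2))
  have hcos : ∀ x ∈ Icc a b, cos (k * (x - (a + b) / 2)) ≠ 0 := fun x hx ↦ by
    have hlower : k * a ≤ k * x := mul_le_mul_of_nonneg_left hx.1 hk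
    have hupper : k * x ≤ k * b := mul_le_mul_of_nonneg_left hx.2 hk
    exact (cos_pos_of_mem_Ioo ⟨by linarith, by linarith⟩).ne'
  have hTderiv : ∀ x ∈ Icc a b, HasDerivAt T (k ^ 2 + T x ^ 2) x := fun x hx ↦
    hasDerivAt_const_mul_tan (hcos x hx)
  have hT : ContinuousOn T (Icc a b) := HasDerivAt.continuousOn hTderiv
  have hT' : ContinuousOn (fun x ↦ k ^ 2 + T x ^ 2) (Icc a b) := by fun_prop
  have hjacobi := integral_riccati_mul_sq_le_integral_deriv_sq hab hu huu' hu' hua hub hT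
    (fun x hx ↦ (hTderiv x (Ioo_subset_Icc_self hx)).hasDerivWithinAt)
    (hT'.intervalIntegrable_of_Icc hab)
  simpa only [add_sub_cancel_right, intervalIntegral.integral_const_mul] using hjacobi

theorem pi_div_sq_mul_integral_sq_le_integral_deriv_sq (hab : a < b) (hu : ContinuousOn u (Icc a b))
    (huu' : ∀ x ∈ Ioo a b, HasDerivWithinAt u (u' x) (Ioi x) x)
    (hu' : MemLp u' 2 (volume.restrict (Icc a b))) (hua : u a = 0) (hub : u b = 0) :
    (π / (b - a)) ^ 2 * ∫ x in a..b, u x ^ 2 ≤ ∫ x in a..b, u' x ^ 2 := by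
  have hlen : 0 < b - a := sub_pos.2 hab
  have hlim : Tendsto (fun k : ℝ ↦ k ^ 2 * ∫ x in a..b, u x ^ 2) (𝓝[<] (π / (b - a)))
      (𝓝 ((π / (b - a)) ^ 2 * ∫ x in a..b, u x ^ 2)) :=
    tendsto_nhdsWithin_of_tendsto_nhds (Continuous.tendsto (by fun_prop) _)
  refine le_of_tendsto hlim ?_
  filter_upwards [Ioo_mem_nhdsLT (div_pos pi_pos hlen)] with k hk
  exact sq_mul_integral_sq_le_integral_deriv_sq_of_lt_pi hab.le hk.1.le
    ((lt_div_iff₀ hlen).1 hk.2) hu huu' hu' hua hub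

theorem mul_integral_deriv_sq_le_of_mul_integral_sq_le {u'' : ℝ → ℝ} {c : ℝ} (hab : a ≤ b)
    (hc : 0 ≤ c) (hu : ContinuousOn u (Icc a b)) (hu' : ContinuousOn u' (Icc a b))
    (huu' : ∀ x ∈ Ioo a b, HasDerivWithinAt u (u' x) (Ioi x) x)
    (hu'u'' : ∀ x ∈ Ioo a b, HasDerivWithinAt u' (u'' x) (Ioi x) x)
    (hu'' : MemLp u'' 2 (volume.restrict (Icc a b))) (hua : u a = 0) (hub : u b = 0)
    (hle : c * ∫ x in a..b, u x ^ 2 ≤ ∫ x in a..b, u' x ^ 2) :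
    c * ∫ x in a..b, u' x ^ 2 ≤ ∫ x in a..b, u'' x ^ 2 := by
  have hu''_int : IntervalIntegrable u'' volume a b :=
    (intervalIntegrable_iff_integrableOn_Icc_of_le hab).2 (hu''.integrable one_le_two)
  have hu''_sq : IntervalIntegrable (fun x ↦ u'' x ^ 2) volume a b :=
    (intervalIntegrable_iff_integrableOn_Icc_of_le hab).2 hu''.integrable_sq
  have hu_sq : IntervalIntegrable (fun x ↦ u x ^ 2) volume a b :=
    (hu.pow 2).intervalIntegrable_of_Icc hab
  have hcross : IntervalIntegrable (fun x ↦ u x * u'' x) volume a b :=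
    hu''_int.continuousOn_mul (by rwa [uIcc_of_le hab])
  have hparts : ∫ x in a..b, u x * u'' x = -∫ x in a..b, u' x ^ 2 := by
    have := integral_mul_deriv_eq_deriv_mul_of_hasDeriv_right (u := u) (v := u')
      (by rwa [uIcc_of_le hab]) (by rwa [uIcc_of_le hab])
      (by rwa [min_eq_left hab, max_eq_right hab]) (by rwa [min_eq_left hab, max_eq_right hab])
      (hu'.intervalIntegrable_of_Icc hab) hu''_int
    simpa [hua, hub, sq] using this
  have hsquare : 0 ≤ (∫ x in a..b, u'' x ^ 2) - 2 * c * (∫ x in a..b, u' x ^ 2)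
      + c ^ 2 * ∫ x in a..b, u x ^ 2 :=
    calc 0 ≤ ∫ x in a..b, (u'' x + c * u x) ^ 2 := integral_nonneg hab fun _ _ ↦ sq_nonneg _
      _ = ∫ x in a..b, (u'' x ^ 2 + 2 * c * (u x * u'' x) + c ^ 2 * u x ^ 2) := by
        congr with x
        ring
      _ = _ := by
        rw [integral_add (hu''_sq.add (hcross.const_mul _)) (hu_sq.const_mul _),
          integral_add hu''_sq (hcross.const_mul _), intervalIntegral.integral_const_mul,
          intervalIntegral.integral_const_mul, hparts]
        ring
  linarith [mul_le_mul_of_nonneg_left hle hc]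

end Wirtinger

theorem poincare_wirtinger_general {a b : ℝ} (hab : a < b) {f f' : ℝ → ℝ}
    (hf : ContinuousOn f (Icc a b)) (hff' : ∀ x ∈ Ioo a b, HasDerivWithinAt f (f' x) (Ioi x) x)
    (hf' : MemLp f' 2 (volume.restrict (Icc a b))) (hmean : ∫ x in a..b, f x = 0) :
    (π / (b - a)) ^ 2 * ∫ x in a..b, f x ^ 2 ≤ ∫ x in a..b, f' x ^ 2 := by
  set F : ℝ → ℝ := fun t ↦ ∫ s in a..t, f s
  have hF : ContinuousOn F (Icc a b) := by
    rw [← uIcc_of_le hab.le] at hf ⊢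
    exact continuousOn_primitive_interval (hf.integrableOn_compact isCompact_uIcc)
  have hFf : ∀ x ∈ Ioo a b, HasDerivWithinAt F (f x) (Ioi x) x := fun x hx ↦
    (hasDerivAt_integral_of_continuousOn_Icc hf hx).hasDerivWithinAt
  have hFa : F a = 0 := integral_same
  have hfL2 : MemLp f 2 (volume.restrict (Icc a b)) :=
    memLp_restrict_of_continuousOn_isCompact isCompact_Icc measurableSet_Icc hf 2
  exact mul_integral_deriv_sq_le_of_mul_integral_sq_le hab.le (sq_nonneg _) hF hf hFf hff' hf'
    hFa hmean (pi_div_sq_mul_integral_sq_le_integral_deriv_sq hab hF hFf hfL2 hFa hmean)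

/-- (Poincaré–Wirtinger inequality with optimal constant.)
If `f` is continuously differentiable on `[0, d]` (with derivative `f'` there)
and has zero mean on `[0, d]`, then `∫₀^d f'² ≥ (π/d)² ∫₀^d f²`. -/
theorem poincare_wirtinger {d : ℝ} (hd : 0 < d) (f f' : ℝ → ℝ)
    (hderiv : ∀ s ∈ Set.Icc (0 : ℝ) d, HasDerivWithinAt f (f' s) (Set.Icc (0 : ℝ) d) s)
    (hcont : ContinuousOn f' (Set.Icc (0 : ℝ) d))
    (hmean : ∫ s in (0 : ℝ)..d, f s = 0) :
    (Real.pi / d) ^ 2 * ∫ s in (0 : ℝ)..d, (f s) ^ 2 ≤ ∫ s in (0 : ℝ)..d, (f' s) ^ 2 := by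
  have hright : ∀ s ∈ Ioo 0 d, HasDerivWithinAt f (f' s) (Ioi s) s := fun s hs ↦
    ((hderiv s (Ioo_subset_Icc_self hs)).hasDerivAt (Icc_mem_nhds hs.1 hs.2)).hasDerivWithinAt
  have hf'L2 : MemLp f' 2 (volume.restrict (Icc 0 d)) :=
    memLp_restrict_of_continuousOn_isCompact isCompact_Icc measurableSet_Icc hcont 2
  simpa only [sub_zero] using
    poincare_wirtinger_general hd (HasDerivWithinAt.continuousOn hderiv) hright hf'L2 hmean
end
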